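/- For every ordinal α < ε₀ and natural numbers n, x, k, l: if ω^α·k ↘ₙˣ 0 and l ≤ k, then ω^α·k ↘ₙˣ ω^α·l. -/

import Mathlib

/-!
While the descent from `ω^α` has not reached `0`, the descent from `ω^α·(m+2)` performs exactly
the same steps on its last summand `ω^α`, behind the untouched prefix `ω^α·(m+1)`
(`fund_omega_pow_mul`). Hence a descent from `ω^α·(m+2)` that reaches `0` must at some point have
reduced the last summand to `0`, and at the first such moment it is at `ω^α·(m+1)`
(`exists_fund_eq_pred`). Induction on `k` gives all the `ω^α·l` with `l ≤ k`.
-/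

namespace Paper

/-- `pred? o = some β` when the notation `o` denotes a successor ordinal `β + 1`;
`pred? o = none` when `o` denotes `0` or a limit ordinal. -/
def pred? : ONote → Option ONote
  | ONote.zero => none
  | ONote.oadd e m a =>
    match a with
    | ONote.oadd e' m' a' => (pred? (ONote.oadd e' m' a')).map (ONote.oadd e m)
    | ONote.zero => if e = 0 then some (ONote.ofNat ((m : ℕ) - 1)) else none

/-- The fundamental sequence: `fs α n` is `{α}(n)`.  We have `{0}(n) = 0`,
`{β+1}(n) = β`, `{γ + ω^(δ+1)}(n) = γ + ω^δ·(n+1)` and `{γ + ω^δ}(n) = γ + ω^({δ}(n))`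
for `δ` a limit. -/
def fs : ONote → ℕ → ONote
  | ONote.zero, _ => ONote.zero
  | ONote.oadd e m a, n =>
    match a with
    | ONote.oadd e' m' a' => ONote.oadd e m (fs (ONote.oadd e' m' a') n)
    | ONote.zero =>
      match e with
      | ONote.zero => ONote.ofNat ((m : ℕ) - 1)
      | ONote.oadd e1 m1 a1 =>
        let tail : ONote :=
          match pred? (ONote.oadd e1 m1 a1) with
          | some p => ONote.oadd p ⟨n + 1, n.succ_pos⟩ ONote.zero
          | none => ONote.oadd (fs (ONote.oadd e1 m1 a1) n) 1 ONote.zero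
        if (m : ℕ) = 1 then tail
        else ONote.oadd (ONote.oadd e1 m1 a1) ⟨max ((m : ℕ) - 1) 1, by omega⟩ tail

/-- Iteration of the fundamental sequence: `fund α n x` applies `{·}(n)` to `α`, `x` times. -/
def fund (α : ONote) (n : ℕ) : ℕ → ONote
  | 0 => α
  | x + 1 => fs (fund α n x) n

/-- `StepAt α n x β` expresses `α ↘ₙˣ β`: some `y ≤ x` has `fund α n y = β`. -/
def StepAt (α : ONote) (n x : ℕ) (β : ONote) : Prop :=
  ∃ y ≤ x, fund α n y = β

/-- `Step α n β` expresses `α ↘ₙ β`. -/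
def Step (α : ONote) (n : ℕ) (β : ONote) : Prop :=
  ∃ x, StepAt α n x β


theorem fund_add (α : ONote) (n y z : ℕ) : fund α n (y + z) = fund (fund α n y) n z := by
  induction z with
  | zero => rfl
  | succ z ih => rw [← Nat.add_assoc, fund, fund, ih]

theorem omega_pow_mul_ofNat_zero (α : ONote) :
    ONote.oadd α 1 0 * ONote.ofNat 0 = 0 := rfl

theorem omega_pow_mul_ofNat_succ (α : ONote) (m : ℕ) :
    ONote.oadd α 1 0 * ONote.ofNat (m + 1) = ONote.oadd α m.succPNat 0 := by
  rw [ONote.ofNat_succ, ONote.oadd_mul, if_pos rfl, one_mul]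

theorem fs_oadd_of_ne_zero (e : ONote) (m : ℕ+) {a : ONote} (ha : a ≠ 0) (n : ℕ) :
    fs (ONote.oadd e m a) n = ONote.oadd e m (fs a n) := by
  cases a with
  | zero => exact absurd rfl ha
  | oadd e' m' a' => simp only [fs]

/-- One step applied to `ω^α·(m+2)` only affects the last summand `ω^α`. -/
theorem fs_omega_pow_mul (α : ONote) (m n : ℕ) :
    fs (ONote.oadd α (m + 1).succPNat 0) n =
      ONote.oadd α m.succPNat (fs (ONote.oadd α 1 0) n) := by
  change fs (ONote.oadd α (m + 1).succPNat ONote.zero) n =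
      ONote.oadd α m.succPNat (fs (ONote.oadd α 1 ONote.zero) n)
  cases α with
  | zero => simp [fs]
  | oadd e1 m1 a1 =>
    simp [fs]
    rfl

/-- As long as the descent from `ω^α` has not reached `0`, the descent from `ω^α·(m+2)`
runs parallel to it behind the prefix `ω^α·(m+1)`. -/
theorem fund_omega_pow_mul (α : ONote) (m n y : ℕ)
    (hy : ∀ j ≤ y, fund (ONote.oadd α 1 0) n j ≠ 0) :
    fund (ONote.oadd α (m + 1).succPNat 0) n (y + 1) =
      ONote.oadd α m.succPNat (fund (ONote.oadd α 1 0) n (y + 1)) := by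
  induction y with
  | zero => exact fs_omega_pow_mul α m n
  | succ y ih =>
    rw [fund, ih fun j hj => hy j (by omega), fs_oadd_of_ne_zero _ _ (hy _ le_rfl)]
    rfl

/-- A descent from `ω^α·(m+2)` to `0` passes through `ω^α·(m+1)`. -/
theorem exists_fund_eq_pred (α : ONote) (m n y : ℕ)
    (h : fund (ONote.oadd α (m + 1).succPNat 0) n y = 0) :
    ∃ j ≤ y, fund (ONote.oadd α (m + 1).succPNat 0) n j = ONote.oadd α m.succPNat 0 := by
  classical
  have hex : ∃ j ≤ y, fund (ONote.oadd α 1 0) n j = 0 := by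
    by_contra! hne
    cases y with
    | zero => cases h
    | succ y =>
      rw [fund_omega_pow_mul α m n y fun j hj => hne j (by omega)] at h
      cases h
  -- The first time `ω^α` reaches `0` is when `ω^α·(m+2)` loses its last summand.
  have hex' : ∃ j, fund (ONote.oadd α 1 0) n j = 0 := hex.imp fun _ hj => hj.2
  obtain ⟨j, hjy, hj⟩ := hex
  have hmin : Nat.find hex' ≤ j := Nat.find_min' hex' hj
  have hspec := Nat.find_spec hex'
  have hlt : ∀ i < Nat.find hex', fund (ONote.oadd α 1 0) n i ≠ 0 :=
    fun i hi => Nat.find_min hex' hi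
  refine ⟨Nat.find hex', hmin.trans hjy, ?_⟩
  generalize Nat.find hex' = z at *
  cases z with
  | zero => cases hspec
  | succ z => rw [fund_omega_pow_mul α m n z fun i hi => hlt i (by omega), hspec]

/-- If `ω^α·k ↘ₙˣ 0` and `l ≤ k`, then `ω^α·k ↘ₙˣ ω^α·l`. -/
theorem stepAt_omega_pow_mul (α : ONote) (hα : α.NF) (n x k l : ℕ) (hl : l ≤ k)
    (h : StepAt (ONote.oadd α 1 0 * ONote.ofNat k) n x 0) :
    StepAt (ONote.oadd α 1 0 * ONote.ofNat k) n x
      (ONote.oadd α 1 0 * ONote.ofNat l) := by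
  induction k generalizing x with
  | zero => exact ⟨0, Nat.zero_le _, by rw [Nat.le_zero.mp hl]; rfl⟩
  | succ k ih =>
    rcases Nat.lt_or_ge k l with hkl | hlk
    · exact ⟨0, Nat.zero_le _, by rw [le_antisymm hl hkl]; rfl⟩
    cases k with
    | zero => rwa [Nat.le_zero.mp hlk, omega_pow_mul_ofNat_zero]
    | succ m =>
      obtain ⟨y, hyx, hy⟩ := h
      rw [omega_pow_mul_ofNat_succ] at hy ⊢
      obtain ⟨j, hjy, hj⟩ := exists_fund_eq_pred α m n y hy
      rw [← omega_pow_mul_ofNat_succ α m] at hj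
      have h0 : fund (ONote.oadd α 1 0 * ONote.ofNat (m + 1)) n (y - j) = 0 := by
        rw [← hj, ← fund_add, Nat.add_sub_cancel' hjy, hy]
      obtain ⟨z, hz, hzl⟩ := ih (y - j) hlk ⟨_, le_rfl, h0⟩
      exact ⟨j + z, by omega, by rw [fund_add, hj, hzl]⟩

end Paper
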